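/- Let q be a prime power and d a positive integer with 3 | d, d | q²−1 and gcd(q+1, d) = d/3. Let ξ be a primitive element of F_{q²} and ω = ξ^{(q²−1)/3}. Let b, c ∈ F_{q²} and j ∈ ℤ satisfy b = ξ^{(q−1)·j·(d/3)} and c^q = b^q·c. For k ∈ {1, 2} define f(x) = (x^q + b·x + c)^{k·(q²−1)/d + 1} − b·x. Then f is a permutation polynomial of F_{q²} if and only if the pair ((ω^{k·q} + ω^k − 1)^{(q²−1)/d}, (ω^{2k·q} + ω^{2k} − 1)^{(q²−1)/d}) equals (1, 1) or (ω, ω²). -/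

import Mathlib

/-!
Write `σ x = x ^ q` and `e = (q ^ 2 - 1) / d`. The map `φ x = σ x + b x + c` sends `F` onto the
`σ`-eigenline `{u | σ u = σ b * u}`, and `ψ x = b * σ x + x - c` satisfies `ψ (f x) = g (φ x)` with
`g u = u * P (u ^ e)` and `P y = σ y ^ k + y ^ k - 1`, an element of the fixed field of `σ`.
On each fibre of `φ`, which is a coset of the kernel of `x ↦ σ x + b x`, the map `f` is an affine
bijection onto a fibre of `ψ`, so `f` is injective iff `g` is injective on the eigenline.
The condition on the gcd makes `u ↦ u ^ e` carry the nonzero points of the eigenline onto the cube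
roots of unity, on which `g` induces `y ↦ y * P y ^ e`. This map fixes `1`, so it permutes the cube
roots of unity iff it fixes or exchanges `ω` and `ω ^ 2`.
-/

open Function Set

section Involution

variable {R : Type*} [CommRing R] {σ : R →+* R} {b c τ : R}

theorem map_add_mul_add_mem_eigenline (hσ : Involutive σ) (hb : σ b * b = 1)
    (hc : σ c = σ b * c) (x : R) :
    σ (σ x + b * x + c) = σ b * (σ x + b * x + c) := by
  simp only [map_add, map_mul, hσ x, hc]
  linear_combination (-x) * hb

theorem exists_map_add_mul_add_eq (hσ : Involutive σ) (hb : σ b * b = 1) (hc : σ c = σ b * c)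
    (hτ : σ τ + τ = 1) {u : R} (hu : σ u = σ b * u) : ∃ x, σ x + b * x + c = u := by
  refine ⟨τ * (u - c) * σ b, ?_⟩
  simp only [map_mul, map_sub, hσ b, hu, hc]
  linear_combination (u - c) * hτ + (u - c) * (σ τ + τ) * hb

theorem injective_comp_sub_mul_iff (hσ : Involutive σ) (hb : σ b * b = 1) (hc : σ c = σ b * c)
    (hτ : σ τ + τ = 1) (G : R → R) :
    Injective (fun x => G (σ x + b * x + c) - b * x) ↔
      InjOn (fun u => b * σ (G u) + G u - u) {u | σ u = σ b * u} := by
  have intertwine : ∀ x u, σ x + b * x + c = u →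
      b * σ (G u - b * x) + (G u - b * x) - c = b * σ (G u) + G u - u := by
    intro x u hx
    simp only [map_sub, map_mul]
    linear_combination (-σ x) * hb - hx
  constructor
  · intro hinj u hu v hv huv
    obtain ⟨x, hx⟩ := exists_map_add_mul_add_eq hσ hb hc hτ hu
    obtain ⟨y, hy⟩ := exists_map_add_mul_add_eq hσ hb hc hτ hv
    set w := (G u - b * x) - (G v - b * y) with hw
    have hw_ker : b * σ w + w = 0 := by
      rw [hw, map_sub]
      linear_combination intertwine x u hx - intertwine y v hy + huv
    -- Translating `x` by `σ b * w` stays in the fibre over `u` and turns the value at `x` into the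
    -- value at `y`.
    have hfibre : σ (x + σ b * w) + b * (x + σ b * w) + c = u := by
      simp only [map_add, map_mul, hσ b]
      linear_combination hx + hw_ker + w * hb
    have hxy : x + σ b * w = y := hinj <| by
      simp only [hfibre, hy]
      linear_combination (-w) * hb - hw
    rw [← hfibre, hxy, hy]
  · intro hinj x y hxy
    simp only at hxy
    have hφ : σ x + b * x + c = σ y + b * y + c :=
      hinj (map_add_mul_add_mem_eigenline hσ hb hc x)
        (map_add_mul_add_mem_eigenline hσ hb hc y) <| by
          simp only [← intertwine x _ rfl, ← intertwine y _ rfl, hxy]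
    rw [hφ] at hxy
    linear_combination (-σ b) * hxy - (x - y) * hb

end Involution

section Eigenline

variable {F : Type*} [Field F] {σ : F →+* F} {β : F} {e ℓ : ℕ}

theorem exists_map_add_self_eq_one (hσ : Involutive σ) (hne : σ ≠ RingHom.id F) :
    ∃ τ, σ τ + τ = 1 := by
  obtain ⟨x, hx⟩ : ∃ x, σ x + x ≠ 0 := by
    by_contra! h
    have two_eq_zero : (1 : F) + 1 = 0 := by simpa only [map_one] using h 1
    exact hne <| RingHom.ext fun x => by
      rw [RingHom.id_apply]
      linear_combination h x - x * two_eq_zero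
  refine ⟨x / (σ x + x), ?_⟩
  rw [map_div₀, map_add, hσ x, add_comm x, ← add_div, div_self hx]

theorem image_pow_eigenline {v : F} (hv : σ v = β * v) (hv0 : v ≠ 0) (hve : (v ^ e) ^ ℓ = 1)
    (hfix : (· ^ e) '' {a | σ a = a ∧ a ≠ 0} = {y : F | y ^ ℓ = 1}) :
    (· ^ e) '' {u | σ u = β * u ∧ u ≠ 0} = {y : F | y ^ ℓ = 1} := by
  apply Subset.antisymm
  · rintro _ ⟨u, ⟨hu, hu0⟩, rfl⟩
    have hβ : β ≠ 0 := left_ne_zero_of_mul (hv ▸ (map_ne_zero σ).mpr hv0)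
    have huv : ((u / v) ^ e) ^ ℓ = 1 :=
      hfix.subset ⟨u / v, ⟨by rw [map_div₀, hu, hv, mul_div_mul_left _ _ hβ],
        div_ne_zero hu0 hv0⟩, rfl⟩
    rwa [div_pow, div_pow, hve, div_one] at huv
  · intro y hy
    obtain ⟨a, ⟨ha, ha0⟩, hay⟩ : y / v ^ e ∈ (· ^ e) '' {a | σ a = a ∧ a ≠ 0} :=
      hfix.superset (by rw [mem_ofPred_eq, div_pow, hy, hve, div_one])
    refine ⟨a * v, ⟨by rw [map_mul, ha, hv, mul_left_comm], mul_ne_zero ha0 hv0⟩, ?_⟩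
    simp only at hay ⊢
    rw [mul_pow, hay, div_mul_cancel₀ _ (pow_ne_zero e hv0)]

section Induced

variable {P : F → F}

theorem injOn_mul_pow_of_injOn_eigenline
    (himage : (· ^ e) '' {u | σ u = β * u ∧ u ≠ 0} = {y : F | y ^ ℓ = 1})
    (hP : ∀ y, σ (P y) = P y) (hP0 : ∀ y, y ^ ℓ = 1 → P y ≠ 0)
    (hinj : InjOn (fun u => u * P (u ^ e)) {u | σ u = β * u}) :
    InjOn (fun y => y * P y ^ e) {y | y ^ ℓ = 1} := by
  intro y hy z hz hyz
  obtain ⟨u, ⟨hu, -⟩, rfl⟩ := himage.superset hy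
  have hPz := hP0 z hz
  -- Rescaling `u` inside its line gives a point of the class of `z` with the same image.
  set v := u * P (u ^ e) / P z with hv
  have hvz : v ^ e = z := by
    rw [hv, div_pow, mul_pow, div_eq_iff (pow_ne_zero e hPz)]
    exact hyz
  have hvline : σ v = β * v := by
    rw [hv, map_div₀, map_mul, hP, hP, hu]
    ring
  have huv : u = v := hinj hu hvline <| by
    simp only [hvz]
    rw [hv, div_mul_cancel₀ _ hPz]
  exact (congrArg (· ^ e) huv).trans hvz

theorem injOn_eigenline_of_injOn_mul_pow
    (himage : (· ^ e) '' {u | σ u = β * u ∧ u ≠ 0} = {y : F | y ^ ℓ = 1})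
    (hP0 : ∀ y, y ^ ℓ = 1 → P y ≠ 0)
    (hinj : InjOn (fun y => y * P y ^ e) {y | y ^ ℓ = 1}) :
    InjOn (fun u => u * P (u ^ e)) {u | σ u = β * u} := by
  have hclass : ∀ u, σ u = β * u → u ≠ 0 → (u ^ e) ^ ℓ = 1 := fun u hu hu0 =>
    himage.subset ⟨u, ⟨hu, hu0⟩, rfl⟩
  have hne : ∀ u, σ u = β * u → u ≠ 0 → u * P (u ^ e) ≠ 0 := fun u hu hu0 =>
    mul_ne_zero hu0 (hP0 _ (hclass u hu hu0))
  intro u hu v hv huv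
  simp only at huv
  rcases eq_or_ne u 0 with rfl | hu0
  · by_contra hv0
    exact hne v hv (Ne.symm hv0) (by rw [← huv, zero_mul])
  rcases eq_or_ne v 0 with rfl | hv0
  · exact absurd (by rw [huv, zero_mul]) (hne u hu hu0)
  have hpow : u ^ e = v ^ e := hinj (hclass u hu hu0) (hclass v hv hv0) <| by
    simp only [← mul_pow, huv]
  rw [hpow] at huv
  exact mul_right_cancel₀ (hP0 _ (hclass v hv hv0)) huv

theorem injOn_eigenline_iff_bijOn [Finite F] (he : e ≠ 0)
    (himage : (· ^ e) '' {u | σ u = β * u ∧ u ≠ 0} = {y : F | y ^ ℓ = 1})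
    (hP : ∀ y, σ (P y) = P y) :
    InjOn (fun u => u * P (u ^ e)) {u | σ u = β * u} ↔
      BijOn (fun y => y * P y ^ e) {y | y ^ ℓ = 1} {y | y ^ ℓ = 1} := by
  have hroot_ne : ∀ y : F, y ^ ℓ = 1 → y ≠ 0 := by
    intro y hy
    obtain ⟨u, ⟨-, hu0⟩, rfl⟩ := himage.superset hy
    exact pow_ne_zero e hu0
  constructor
  · intro hinj
    have hP0 : ∀ y, y ^ ℓ = 1 → P y ≠ 0 := by
      intro y hy hPy
      obtain ⟨u, ⟨hu, hu0⟩, rfl⟩ := himage.superset hy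
      exact hu0 (hinj hu (by simp only [mem_ofPred_eq, map_zero, mul_zero]) (by simp_all))
    refine ((toFinite _).injOn_iff_bijOn_of_mapsTo ?_).mp
      (injOn_mul_pow_of_injOn_eigenline himage hP hP0 hinj)
    intro y hy
    obtain ⟨u, ⟨hu, hu0⟩, rfl⟩ := himage.superset hy
    rw [← himage]
    exact ⟨u * P (u ^ e), ⟨by rw [map_mul, hP, hu, mul_assoc], mul_ne_zero hu0 (hP0 _ hy)⟩,
      mul_pow ..⟩
  · intro hbij
    refine injOn_eigenline_of_injOn_mul_pow himage (fun y hy hPy => ?_) hbij.injOn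
    exact hroot_ne _ (hbij.mapsTo hy) (by simp only [hPy, zero_pow he, mul_zero])

end Induced

theorem bijective_mul_comp_pow_sub_mul_iff [Finite F] (hσ : Involutive σ)
    (hne : σ ≠ RingHom.id F) {w b c : F} (hw : w ≠ 0) (hb : b = σ w / w) (hc : σ c = σ b * c)
    (he : e ≠ 0) (hwe : (w ^ e) ^ ℓ = 1)
    (hfix : (· ^ e) '' {a | σ a = a ∧ a ≠ 0} = {y : F | y ^ ℓ = 1}) (h : F → F) :
    Bijective (fun x => (σ x + b * x + c) * h ((σ x + b * x + c) ^ e) - b * x) ↔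
      BijOn (fun y => y * (σ (h y) + h y - 1) ^ e) {y | y ^ ℓ = 1} {y | y ^ ℓ = 1} := by
  have hσw : σ w ≠ 0 := (map_ne_zero σ).mpr hw
  have hσb : σ b = w / σ w := by rw [hb, map_div₀, hσ w]
  have hbb : σ b * b = 1 := by rw [hσb, hb, div_mul_div_cancel₀ hσw, div_self hw]
  obtain ⟨τ, hτ⟩ := exists_map_add_self_eq_one hσ hne
  have himage : (· ^ e) '' {u | σ u = σ b * u ∧ u ≠ 0} = {y : F | y ^ ℓ = 1} :=
    image_pow_eigenline (v := w⁻¹)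
      (by rw [map_inv₀, hσb, div_mul_eq_mul_div, mul_inv_cancel₀ hw, one_div])
      (inv_ne_zero hw) (by rw [inv_pow, inv_pow, hwe, inv_one]) hfix
  have hinduced : EqOn (fun u => b * σ (u * h (u ^ e)) + u * h (u ^ e) - u)
      (fun u => u * (σ (h (u ^ e)) + h (u ^ e) - 1)) {u | σ u = σ b * u} := by
    intro u hu
    simp only [map_mul, mem_ofPred_eq.mp hu]
    linear_combination u * σ (h (u ^ e)) * hbb
  have htrace : ∀ y, σ (σ (h y) + h y - 1) = σ (h y) + h y - 1 := fun y => by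
    rw [map_sub, map_add, hσ, map_one, add_comm]
  rw [← Finite.injective_iff_bijective,
    injective_comp_sub_mul_iff hσ hbb hc hτ (fun u => u * h (u ^ e)), hinduced.injOn_iff,
    injOn_eigenline_iff_bijOn (P := fun y => σ (h y) + h y - 1) he himage htrace]

end Eigenline

section RootsOfUnity

theorem image_pow_setOf_pow_eq_one {R : Type*} [CommRing R] [IsDomain R] {ζ : R} {n m ℓ e : ℕ}
    (hζ : IsPrimitiveRoot ζ n) (hn : n ≠ 0) (h : n * m = ℓ * e) (hm : m.Coprime ℓ) :
    (· ^ e) '' {a | a ^ n = 1} = {y : R | y ^ ℓ = 1} := by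
  apply Subset.antisymm
  · rintro _ ⟨a, ha, rfl⟩
    rw [mem_ofPred_eq, ← pow_mul, mul_comm e, ← h, pow_mul, ha, one_pow]
  · intro y hy
    obtain ⟨t, rfl⟩ : ℓ ∣ n := hm.symm.dvd_of_dvd_mul_right (Dvd.intro e h.symm)
    obtain ⟨hℓ, -⟩ := mul_ne_zero_iff.mp hn
    obtain rfl : t * m = e := Nat.eq_of_mul_eq_mul_left hℓ.bot_lt (by rw [← h, mul_assoc])
    have hprim : IsPrimitiveRoot ((ζ ^ t) ^ m) ℓ :=
      (hζ.pow hn.bot_lt (mul_comm ℓ t)).pow_of_coprime m hm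
    have : NeZero ℓ := ⟨hℓ⟩
    obtain ⟨i, -, rfl⟩ := hprim.eq_pow_of_pow_eq_one hy
    refine ⟨ζ ^ i, ?_, by ring⟩
    rw [mem_ofPred_eq, ← pow_mul, mul_comm i, pow_mul, hζ.pow_eq_one, one_pow]

variable {F : Type*} [Field F] {ω : F}

theorem setOf_pow_three_eq_one (hω : IsPrimitiveRoot ω 3) :
    {y : F | y ^ 3 = 1} = {1, ω, ω ^ 2} := by
  apply Subset.antisymm
  · intro y hy
    obtain ⟨i, hi, rfl⟩ := hω.eq_pow_of_pow_eq_one hy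
    interval_cases i <;> simp
  · rintro _ (rfl | rfl | rfl)
    · exact one_pow 3
    · exact hω.pow_eq_one
    · rw [mem_ofPred_eq, pow_right_comm, hω.pow_eq_one, one_pow]

theorem bijOn_cubeRoots_iff (hω : IsPrimitiveRoot ω 3) {g : F → F} (hg : g 1 = 1) :
    BijOn g {y | y ^ 3 = 1} {y | y ^ 3 = 1} ↔
      (g ω = ω ∧ g (ω ^ 2) = ω ^ 2) ∨ (g ω = ω ^ 2 ∧ g (ω ^ 2) = ω) := by
  have hω1 : ω ≠ 1 := hω.ne_one (by norm_num)
  have hω2 : ω ^ 2 ≠ 1 := hω.pow_ne_one_of_pos_of_lt two_ne_zero (by norm_num)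
  have hωω2 : ω ≠ ω ^ 2 := fun h =>
    hω1 (mul_left_cancel₀ (hω.ne_zero (by norm_num)) (by linear_combination -h))
  rw [setOf_pow_three_eq_one hω]
  constructor
  · intro hbij
    have hmem : ∀ y ∈ ({1, ω, ω ^ 2} : Set F), y ≠ 1 → g y = ω ∨ g y = ω ^ 2 := fun y hy hy1 =>
      (hbij.mapsTo hy).resolve_left fun h =>
        hy1 (hbij.injOn hy (mem_insert _ _) (h.trans hg.symm))
    have hne : g ω ≠ g (ω ^ 2) := fun h => hωω2 (hbij.injOn (by simp) (by simp) h)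
    have hgω := hmem ω (by simp) hω1
    have hgω2 := hmem (ω ^ 2) (by simp) hω2
    grind
  · intro h
    have hinv : LeftInvOn g g {1, ω, ω ^ 2} := by
      rintro _ (rfl | rfl | rfl) <;> rcases h with ⟨h₁, h₂⟩ | ⟨h₁, h₂⟩ <;> simp only [hg, h₁, h₂]
    have hmaps : MapsTo g {1, ω, ω ^ 2} {1, ω, ω ^ 2} := by
      rintro _ (rfl | rfl | rfl) <;> rcases h with ⟨h₁, h₂⟩ | ⟨h₁, h₂⟩ <;> simp [hg, h₁, h₂]
    exact InvOn.bijOn ⟨hinv, hinv⟩ hmaps hmaps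

theorem bijOn_mul_cubeRoots_iff (hω : IsPrimitiveRoot ω 3) {A : F → F} (hA : A 1 = 1) :
    BijOn (fun y => y * A y) {y | y ^ 3 = 1} {y | y ^ 3 = 1} ↔
      (A ω, A (ω ^ 2)) = (1, 1) ∨ (A ω, A (ω ^ 2)) = (ω, ω ^ 2) := by
  have hω0 : ω ≠ 0 := hω.ne_zero (by norm_num)
  have hω4 : ω ^ 2 * ω ^ 2 = ω := by linear_combination ω * hω.pow_eq_one
  have hswap₁ : ω * A ω = ω ^ 2 ↔ A ω = ω := by rw [sq, mul_right_inj' hω0]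
  have hswap₂ : ω ^ 2 * A (ω ^ 2) = ω ↔ A (ω ^ 2) = ω ^ 2 := by
    rw [← mul_right_inj' (pow_ne_zero 2 hω0) (b := A (ω ^ 2)), hω4]
  rw [bijOn_cubeRoots_iff hω (by rw [one_mul, hA]), hswap₁, hswap₂,
    mul_eq_left₀ hω0, mul_eq_left₀ (pow_ne_zero 2 hω0), Prod.mk.injEq, Prod.mk.injEq]

end RootsOfUnity

section FiniteField

variable {F : Type*} [Field F] {q : ℕ}

theorem exists_ringHom_eq_pow_of_card_eq_pow [Fintype F] {n : ℕ}
    (hF : Fintype.card F = q ^ n) : ∃ σ : F →+* F, ∀ x, σ x = x ^ q := by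
  have hpow : IsPrimePow (q ^ n) := hF ▸ Fintype.isPrimePow_card_of_field
  have hn : n ≠ 0 := by
    rintro rfl
    exact not_isPrimePow_one (by simpa only [pow_zero] using hpow)
  obtain ⟨p, r, hp, -, rfl⟩ := (isPrimePow_nat_iff q).mp ((isPrimePow_pow_iff hn).mp hpow)
  have : Fact p.Prime := ⟨hp⟩
  have : CharP F p := charP_of_card_eq_prime_pow (f := r * n) (by rw [hF, pow_mul])
  exact ⟨iterateFrobenius F p r, iterateFrobenius_def p r⟩

variable {σ : F →+* F} {ξ : F}

theorem ne_id_of_isPrimitiveRoot (hσ : ∀ x, σ x = x ^ q) (hq : 1 < q)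
    (hξ : IsPrimitiveRoot ξ (q ^ 2 - 1)) : σ ≠ RingHom.id F := by
  rintro rfl
  have hq2 : q < q ^ 2 := lt_self_pow₀ hq one_lt_two
  have hpow : ξ ^ (q - 1) = 1 :=
    mul_right_cancel₀ (hξ.ne_zero (by omega)) (by
      rw [← pow_succ, Nat.sub_add_cancel hq.le, ← hσ, one_mul, RingHom.id_apply])
  have := Nat.le_of_dvd (by omega) (hξ.dvd_of_pow_eq_one _ hpow)
  omega

theorem image_pow_fixedPoints {m ℓ e : ℕ} (hσ : ∀ x, σ x = x ^ q) (hq : 1 < q)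
    (hξ : IsPrimitiveRoot ξ (q ^ 2 - 1)) (h : (q - 1) * m = ℓ * e) (hm : m.Coprime ℓ) :
    (· ^ e) '' {a | σ a = a ∧ a ≠ 0} = {y : F | y ^ ℓ = 1} := by
  have hfix : {a | σ a = a ∧ a ≠ 0} = {a : F | a ^ (q - 1) = 1} := by
    ext a
    rcases eq_or_ne a 0 with rfl | ha
    · simp [zero_pow (Nat.sub_ne_zero_of_lt hq)]
    · rw [mem_ofPred_eq, mem_ofPred_eq, and_iff_left ha, hσ, ← pow_sub_one_mul (by omega),
        mul_eq_right₀ ha]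
  rw [hfix]
  have hfactor : q ^ 2 - 1 = (q + 1) * (q - 1) := by simpa only [one_pow] using Nat.sq_sub_sq q 1
  have hpos : 0 < q ^ 2 - 1 := by have := Nat.one_lt_pow two_ne_zero hq; omega
  exact image_pow_setOf_pow_eq_one (hξ.pow hpos hfactor) (Nat.sub_ne_zero_of_lt hq) h hm

end FiniteField

theorem exists_coprime_sub_one_mul_eq {q d ℓ : ℕ} (hd : d ≠ 0) (hℓ : ℓ ∣ d) (hdvd : d ∣ q ^ 2 - 1)
    (hgcd : Nat.gcd (q + 1) d = d / ℓ) :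
    ∃ m, m.Coprime ℓ ∧ (q - 1) * m = ℓ * ((q ^ 2 - 1) / d) := by
  obtain ⟨D, rfl⟩ := hℓ
  obtain ⟨hℓ0, hD0⟩ := mul_ne_zero_iff.mp hd
  rw [Nat.mul_div_cancel_left D hℓ0.bot_lt] at hgcd
  obtain ⟨m, hm⟩ : D ∣ q + 1 := hgcd ▸ Nat.gcd_dvd_left _ _
  refine ⟨m, ?_, Nat.eq_of_mul_eq_mul_left hD0.bot_lt ?_⟩
  · rwa [hm, mul_comm ℓ, Nat.gcd_mul_left, mul_eq_left₀ hD0] at hgcd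
  · calc D * ((q - 1) * m) = (q + 1) * (q - 1) := by rw [hm]; ring
      _ = q ^ 2 - 1 := by simpa only [one_pow] using (Nat.sq_sub_sq q 1).symm
      _ = ℓ * D * ((q ^ 2 - 1) / (ℓ * D)) := (Nat.mul_div_cancel' hdvd).symm
      _ = D * (ℓ * ((q ^ 2 - 1) / (ℓ * D))) := by ring

theorem bijective_mul_comp_pow_sub_mul_iff_of_card_eq_sq {F : Type*} [Field F] [Fintype F]
    {q d ℓ : ℕ} (hF : Fintype.card F = q ^ 2) (hℓ : ℓ ∣ d) (hdvd : d ∣ q ^ 2 - 1)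
    (hgcd : Nat.gcd (q + 1) d = d / ℓ) {ξ : F} (hξ : IsPrimitiveRoot ξ (q ^ 2 - 1)) {b c : F}
    {j : ℤ} (hb : b = ξ ^ (((q : ℤ) - 1) * j * ((d / ℓ : ℕ) : ℤ))) (hc : c ^ q = b ^ q * c)
    (h : F → F) :
    Bijective (fun x => (x ^ q + b * x + c) * h ((x ^ q + b * x + c) ^ ((q ^ 2 - 1) / d)) - b * x) ↔
      BijOn (fun y => y * (h y ^ q + h y - 1) ^ ((q ^ 2 - 1) / d))
        {y | y ^ ℓ = 1} {y | y ^ ℓ = 1} := by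
  have hq2 : 1 < q ^ 2 := hF ▸ Fintype.one_lt_card
  have hq : 1 < q := (Nat.one_lt_pow_iff two_ne_zero).mp hq2
  have hpos : 0 < q ^ 2 - 1 := Nat.sub_pos_of_lt hq2
  have hξ0 : ξ ≠ 0 := hξ.ne_zero hpos.ne'
  have he : (q ^ 2 - 1) / d ≠ 0 := Nat.div_ne_zero_iff_of_dvd hdvd |>.mpr
    ⟨hpos.ne', ne_zero_of_dvd_ne_zero hpos.ne' hdvd⟩
  obtain ⟨σ, hσ⟩ := exists_ringHom_eq_pow_of_card_eq_pow hF
  have hinv : Involutive σ := fun x => by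
    rw [hσ, hσ, ← pow_mul, ← sq, ← hF, FiniteField.pow_card]
  have hb_quot : b = σ (ξ ^ (j * (d / ℓ : ℕ))) / ξ ^ (j * (d / ℓ : ℕ)) := by
    rw [hb, map_zpow₀, hσ, ← zpow_natCast, ← zpow_mul, ← zpow_sub₀ hξ0]
    congr 1
    ring
  have hroot : ((ξ ^ (j * (d / ℓ : ℕ))) ^ ((q ^ 2 - 1) / d)) ^ ℓ = 1 := by
    have hexp : d / ℓ * ((q ^ 2 - 1) / d * ℓ) = q ^ 2 - 1 := by
      rw [← mul_assoc, mul_right_comm, Nat.div_mul_cancel hℓ, Nat.mul_div_cancel' hdvd]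
    rw [← zpow_natCast, ← zpow_natCast, ← zpow_mul, ← zpow_mul, mul_assoc,
      ← Nat.cast_mul, ← Nat.cast_mul, hexp, zpow_mul', zpow_natCast, hξ.pow_eq_one, one_zpow]
  obtain ⟨m, hm, hqm⟩ :=
    exists_coprime_sub_one_mul_eq (ne_zero_of_dvd_ne_zero hpos.ne' hdvd) hℓ hdvd hgcd
  simpa only [hσ] using bijective_mul_comp_pow_sub_mul_iff hinv (ne_id_of_isPrimitiveRoot hσ hq hξ)
    (zpow_ne_zero _ hξ0) hb_quot (by rwa [hσ, hσ]) he hroot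
    (image_pow_fixedPoints hσ hq hξ hqm hm) h

theorem stmt_13_general {F : Type*} [Field F] [Fintype F]
    (q : ℕ) (hF : Fintype.card F = q ^ 2)
    (d : ℕ) (hd3 : 3 ∣ d) (hdvd : d ∣ q ^ 2 - 1)
    (hgcd : Nat.gcd (q + 1) d = d / 3)
    (ξ : F) (hξ : orderOf ξ = q ^ 2 - 1)
    (ω : F) (hω : ω = ξ ^ ((q ^ 2 - 1) / 3))
    (b c : F) (j : ℤ)
    (hb : b = ξ ^ (((q : ℤ) - 1) * j * ((d / 3 : ℕ) : ℤ)))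
    (hc : c ^ q = b ^ q * c)
    (k : ℕ)
    (f : F → F)
    (hf : f = fun x => (x ^ q + b * x + c) ^ (k * ((q ^ 2 - 1) / d) + 1) - b * x) :
    Function.Bijective f ↔
      (((ω ^ (k * q) + ω ^ k - 1) ^ ((q ^ 2 - 1) / d),
        (ω ^ (2 * k * q) + ω ^ (2 * k) - 1) ^ ((q ^ 2 - 1) / d)) = ((1 : F), (1 : F)) ∨
       ((ω ^ (k * q) + ω ^ k - 1) ^ ((q ^ 2 - 1) / d),
        (ω ^ (2 * k * q) + ω ^ (2 * k) - 1) ^ ((q ^ 2 - 1) / d)) = (ω, ω ^ 2)) := by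
  have hpos : 0 < q ^ 2 - 1 := Nat.sub_pos_of_lt (hF ▸ Fintype.one_lt_card)
  have hprim : IsPrimitiveRoot ξ (q ^ 2 - 1) := hξ ▸ IsPrimitiveRoot.orderOf ξ
  have hprimω : IsPrimitiveRoot ω 3 :=
    hω ▸ hprim.pow hpos (Nat.div_mul_cancel (hd3.trans hdvd)).symm
  have hf_eq : f = fun x =>
      (x ^ q + b * x + c) * ((x ^ q + b * x + c) ^ ((q ^ 2 - 1) / d)) ^ k - b * x := by
    simp only [hf, pow_succ', pow_mul']
  rw [hf_eq, bijective_mul_comp_pow_sub_mul_iff_of_card_eq_sq hF hd3 hdvd hgcd hprim hb hc (· ^ k),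
    bijOn_mul_cubeRoots_iff hprimω (by simp only [one_pow, add_sub_cancel_right])]
  simp only [← pow_mul, mul_assoc]

theorem stmt_13 {F : Type*} [Field F] [Fintype F]
    (q : ℕ) (hq : IsPrimePow q) (hF : Fintype.card F = q ^ 2)
    (d : ℕ) (hd3 : 3 ∣ d) (hdvd : d ∣ q ^ 2 - 1)
    (hgcd : Nat.gcd (q + 1) d = d / 3)
    (ξ : F) (hξ : orderOf ξ = q ^ 2 - 1)
    (ω : F) (hω : ω = ξ ^ ((q ^ 2 - 1) / 3))
    (b c : F) (j : ℤ)
    (hb : b = ξ ^ (((q : ℤ) - 1) * j * ((d / 3 : ℕ) : ℤ)))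
    (hc : c ^ q = b ^ q * c)
    (k : ℕ) (hk : k = 1 ∨ k = 2)
    (f : F → F)
    (hf : f = fun x => (x ^ q + b * x + c) ^ (k * ((q ^ 2 - 1) / d) + 1) - b * x) :
    Function.Bijective f ↔
      (((ω ^ (k * q) + ω ^ k - 1) ^ ((q ^ 2 - 1) / d),
        (ω ^ (2 * k * q) + ω ^ (2 * k) - 1) ^ ((q ^ 2 - 1) / d)) = ((1 : F), (1 : F)) ∨
       ((ω ^ (k * q) + ω ^ k - 1) ^ ((q ^ 2 - 1) / d),
        (ω ^ (2 * k * q) + ω ^ (2 * k) - 1) ^ ((q ^ 2 - 1) / d)) = (ω, ω ^ 2)) :=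
  stmt_13_general q hF d hd3 hdvd hgcd ξ hξ ω hω b c j hb hc k f hf
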